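/- arXiv:1906.01829 — 2 statements merged into one kernel-verified Lean document; each statement's English description precedes it below -/
import Mathlib

section
/- Let d be a positive integer, let f : ℝ^d → ℝ and g : ℝ^d → ℝ, and suppose: (1) f is bounded on the box [-1,1]^d and there exist an open set A ⊇ {-1,1}^d and η > 0 such that |f(x₁) - f(x₂)| ≤ η‖x₁ - x₂‖ for all x₁, x₂ ∈ A; (2) g is continuous on [-1,1]^d, g(x) = 0 for every x ∈ {-1,1}^d, g(x) > 0 for every x ∈ [-1,1]^d with x ∉ {-1,1}^d, and for every y ∈ {-1,1}^d there exist a neighborhood S(y) of y and ε(y) > 0 such that g(x) ≥ ε(y)‖x - y‖ for all x ∈ S(y) ∩ [-1,1]^d. Then there exists β₀ ≥ 0 such that for every β > β₀ and every x* ∈ [-1,1]^d, the point x* attains the infimum of f + β·g over [-1,1]^d if and only if x* ∈ {-1,1}^d and f(x*) = min over {-1,1}^d of f. -/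
open Set

noncomputable section

/-- The box `[-1,1]^d` in `ℝ^d` (Euclidean space). -/
def box (d : ℕ) : Set (EuclideanSpace ℝ (Fin d)) :=
  {x | ∀ i, x i ∈ Set.Icc (-1 : ℝ) 1}

/-- The vertex set `{-1,1}^d` in `ℝ^d` (Euclidean space). -/
def vtx (d : ℕ) : Set (EuclideanSpace ℝ (Fin d)) :=
  {x | ∀ i, x i = -1 ∨ x i = 1}

open Filter Topology

/-!
Write `K` for the box and `V` for its vertices. It suffices to find one `c` such that every `x ∈ K`
admits `y ∈ V` with `f y ≤ f x + c * g x`: for `β > c` the inequality becomes strict when `x ∉ V`.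
Near `p ∈ V` take `y = p`, because the linear growth of `g` dominates the variation of `f`; near
`p ∉ V` any fixed `y` works, because `g` is bounded away from zero and `f` is bounded below.
Compactness of `K` makes `c` uniform.
-/

section ExactPenalty

variable {X : Type*} {K V : Set X} {f g : X → ℝ}

lemma exists_forall_mem_of_forall_exists_eventually [TopologicalSpace X] {ι : Type*} [Preorder ι]
    [IsDirectedOrder ι] [Nonempty ι] (hK : IsCompact K) {P : ι → X → Prop}
    (hmono : ∀ x ∈ K, Monotone (P · x)) (hP : ∀ p ∈ K, ∃ c, ∀ᶠ x in 𝓝[K] p, P c x) :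
    ∃ c, ∀ x ∈ K, P c x := by
  suffices h : ∃ c, ∀ x ∈ K, x ∈ K → P c x from
    h.imp fun c hc x hx => hc x hx hx
  refine hK.induction_on (p := fun s => ∃ c, ∀ x ∈ s, x ∈ K → P c x) ?_ ?_ ?_ ?_
  · exact ⟨Classical.arbitrary ι, by simp⟩
  · rintro s t hst ⟨c, hc⟩
    exact ⟨c, fun x hx => hc x (hst hx)⟩
  · rintro s t ⟨a, ha⟩ ⟨b, hb⟩
    obtain ⟨c, hac, hbc⟩ := exists_ge_ge a b
    exact ⟨c, fun x hx hxK => hx.elim (fun hs => hmono x hxK hac (ha x hs hxK))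
      fun ht => hmono x hxK hbc (hb x ht hxK)⟩
  · intro p hp
    obtain ⟨c, hc⟩ := hP p hp
    exact ⟨{x | P c x}, hc, c, fun x hx _ => hx⟩

lemma exists_eventually_le_add_mul_of_pos [TopologicalSpace X] {p : X}
    (hf : BddBelow (f '' K)) (hg : LowerSemicontinuousWithinAt g K p) (hp : 0 < g p) (a : ℝ) :
    ∃ c, ∀ᶠ x in 𝓝[K] p, a ≤ f x + c * g x := by
  obtain ⟨m, hm⟩ := hf
  obtain ⟨δ, hδ, hδp⟩ := exists_between hp
  refine ⟨|a - m| / δ, ?_⟩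
  filter_upwards [hg δ hδp, self_mem_nhdsWithin] with x hgx hxK
  calc
    a ≤ m + |a - m| := by linarith [le_abs_self (a - m)]
    _ = m + |a - m| / δ * δ := by rw [div_mul_cancel₀ _ hδ.ne']
    _ ≤ f x + |a - m| / δ * g x := by
      gcongr
      exact hm (mem_image_of_mem f hxK)

lemma isLocalMinOn_add_div_mul_of_mul_dist_le [PseudoMetricSpace X] {y : X} {η ε : ℝ}
    (hη : 0 ≤ η) (hε : 0 < ε) (hgy : g y = 0)
    (hf : ∀ᶠ x in 𝓝[K] y, f y - f x ≤ η * dist x y)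
    (hg : ∀ᶠ x in 𝓝[K] y, ε * dist x y ≤ g x) :
    IsLocalMinOn (fun x => f x + η / ε * g x) K y := by
  filter_upwards [hf, hg] with x hfx hgx
  calc
    f y + η / ε * g y = f y := by rw [hgy, mul_zero, add_zero]
    _ ≤ f x + η * dist x y := by linarith
    _ = f x + η / ε * (ε * dist x y) := by rw [← mul_assoc, div_mul_cancel₀ _ hε.ne']
    _ ≤ f x + η / ε * g x := by gcongr

lemma isMinOn_add_mul_iff_of_forall_exists_le (hVK : V ⊆ K) (hgV : ∀ x ∈ V, g x = 0)
    (hgpos : ∀ x ∈ K, x ∉ V → 0 < g x) {c β : ℝ} (hcβ : c < β)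
    (hc : ∀ x ∈ K, ∃ y ∈ V, f y ≤ f x + c * g x) {a : X} (ha : a ∈ K) :
    IsMinOn (fun x => f x + β * g x) K a ↔ a ∈ V ∧ IsMinOn f V a := by
  have penalty_eq : ∀ y ∈ V, f y + β * g y = f y := fun y hy => by
    rw [hgV y hy, mul_zero, add_zero]
  have exists_lt : ∀ x ∈ K, x ∉ V → ∃ y ∈ V, f y < f x + β * g x := by
    intro x hx hxV
    obtain ⟨y, hy, hyx⟩ := hc x hx
    exact ⟨y, hy, hyx.trans_lt (by gcongr; exact hgpos x hx hxV)⟩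
  simp only [isMinOn_iff]
  constructor
  · intro hmin
    have haV : a ∈ V := by
      by_contra haV
      obtain ⟨y, hy, hlt⟩ := exists_lt a ha haV
      exact hlt.not_ge (penalty_eq y hy ▸ hmin y (hVK hy))
    exact ⟨haV, fun y hy => by simpa only [penalty_eq, haV, hy] using hmin y (hVK hy)⟩
  · rintro ⟨haV, hmin⟩ x hx
    rw [penalty_eq a haV]
    by_cases hxV : x ∈ V
    · exact (hmin x hxV).trans_eq (penalty_eq x hxV).symm
    · obtain ⟨y, hy, hlt⟩ := exists_lt x hx hxV
      exact (hmin y hy).trans hlt.le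

lemma exists_forall_mem_exists_le_add_mul [TopologicalSpace X] (hK : IsCompact K)
    (hVne : V.Nonempty) (hf : BddBelow (f '' K)) (hg : LowerSemicontinuousOn g K)
    (hgV : ∀ x ∈ V, g x = 0) (hgpos : ∀ x ∈ K, x ∉ V → 0 < g x)
    (hloc : ∀ y ∈ V, ∃ c, IsLocalMinOn (fun x => f x + c * g x) K y) :
    ∃ c, ∀ x ∈ K, ∃ y ∈ V, f y ≤ f x + c * g x := by
  have hgnonneg : ∀ x ∈ K, 0 ≤ g x := fun x hx =>
    (em (x ∈ V)).elim (fun hxV => (hgV x hxV).ge) fun hxV => (hgpos x hx hxV).le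
  refine exists_forall_mem_of_forall_exists_eventually hK ?_ fun p hp => ?_
  · rintro x hx c c' hcc' ⟨y, hy, hyx⟩
    exact ⟨y, hy, hyx.trans (by gcongr; exact hgnonneg x hx)⟩
  · by_cases hpV : p ∈ V
    · obtain ⟨c, hc⟩ := hloc p hpV
      exact ⟨c, hc.mono fun x hx =>
        ⟨p, hpV, by simpa only [hgV p hpV, mul_zero, add_zero] using hx⟩⟩
    · obtain ⟨v, hv⟩ := hVne
      obtain ⟨c, hc⟩ := exists_eventually_le_add_mul_of_pos hf (hg p hp) (hgpos p hp hpV) (f v)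
      exact ⟨c, hc.mono fun x hx => ⟨v, hv, hx⟩⟩

theorem stmt_1_general [TopologicalSpace X] (hK : IsCompact K) (hVK : V ⊆ K)
    (hVne : V.Nonempty) (hf : BddBelow (f '' K)) (hg : LowerSemicontinuousOn g K)
    (hgV : ∀ x ∈ V, g x = 0) (hgpos : ∀ x ∈ K, x ∉ V → 0 < g x)
    (hloc : ∀ y ∈ V, ∃ c, IsLocalMinOn (fun x => f x + c * g x) K y) :
    ∃ β₀ : ℝ, 0 ≤ β₀ ∧ ∀ β > β₀, ∀ a ∈ K,
      (IsMinOn (fun x => f x + β * g x) K a ↔ a ∈ V ∧ IsMinOn f V a) := by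
  obtain ⟨c, hc⟩ := exists_forall_mem_exists_le_add_mul hK hVne hf hg hgV hgpos hloc
  exact ⟨max c 0, le_max_right c 0, fun β hβ a ha =>
    isMinOn_add_mul_iff_of_forall_exists_le hVK hgV hgpos (max_lt_iff.1 hβ).1 hc ha⟩

end ExactPenalty

section Cube

variable (d : ℕ)

lemma isCompact_box : IsCompact (box d) := by
  have hbox : box d = PiLp.homeomorph 2 (fun _ : Fin d => ℝ) ⁻¹' univ.pi fun _ => Icc (-1) 1 := by
    ext x
    exact mem_univ_pi.symm
  rw [hbox, Homeomorph.isCompact_preimage]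
  exact isCompact_univ_pi fun _ => isCompact_Icc

lemma vtx_subset_box : vtx d ⊆ box d := by
  intro x hx i
  rcases hx i with h | h <;> simp [h]

lemma vtx_nonempty : (vtx d).Nonempty :=
  ⟨WithLp.toLp 2 fun _ => 1, fun _ => Or.inr rfl⟩

end Cube

/-- Minimizer-correspondence form of the exact-penalty equivalence: for sufficiently large `β`,
a point of the box attains the infimum of `f + β g` over the box iff it is a vertex minimizing
`f` over the vertex set `{-1,1}^d`. -/
theorem stmt_1 (d : ℕ) (hd : 0 < d) (f g : EuclideanSpace ℝ (Fin d) → ℝ)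
    (hf_bdd : ∃ C : ℝ, ∀ x ∈ box d, |f x| ≤ C)
    (hf_holder : ∃ A : Set (EuclideanSpace ℝ (Fin d)), IsOpen A ∧ vtx d ⊆ A ∧
      ∃ η : ℝ, 0 < η ∧ ∀ x₁ ∈ A, ∀ x₂ ∈ A, |f x₁ - f x₂| ≤ η * ‖x₁ - x₂‖)
    (hg_cont : ContinuousOn g (box d))
    (hg_zero : ∀ x ∈ vtx d, g x = 0)
    (hg_pos : ∀ x ∈ box d, x ∉ vtx d → 0 < g x)
    (hg_growth : ∀ y ∈ vtx d, ∃ S ∈ nhds y, ∃ ε : ℝ, 0 < ε ∧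
      ∀ x ∈ S ∩ box d, ε * ‖x - y‖ ≤ g x) :
    ∃ β₀ : ℝ, 0 ≤ β₀ ∧ ∀ β > β₀, ∀ xs ∈ box d,
      ((∀ x ∈ box d, f xs + β * g xs ≤ f x + β * g x) ↔
        (xs ∈ vtx d ∧ ∀ y ∈ vtx d, f xs ≤ f y)) := by
  obtain ⟨C, hC⟩ := hf_bdd
  obtain ⟨A, hA, hVA, η, hη, hfA⟩ := hf_holder
  have hf_below : BddBelow (f '' box d) :=
    ⟨-C, forall_mem_image.2 fun x hx => neg_le_of_abs_le (hC x hx)⟩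
  have hloc : ∀ y ∈ vtx d, ∃ c, IsLocalMinOn (fun x => f x + c * g x) (box d) y := by
    intro y hy
    obtain ⟨S, hS, ε, hε, hgS⟩ := hg_growth y hy
    refine ⟨η / ε, isLocalMinOn_add_div_mul_of_mul_dist_le hη.le hε (hg_zero y hy) ?_ ?_⟩
    · filter_upwards [mem_nhdsWithin_of_mem_nhds (hA.mem_nhds (hVA hy))] with x hx
      exact dist_eq_norm x y ▸ (abs_sub_le_iff.1 (hfA x hx y (hVA hy))).2
    · filter_upwards [mem_nhdsWithin_of_mem_nhds hS, self_mem_nhdsWithin] with x hxS hxK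
      exact dist_eq_norm x y ▸ hgS x ⟨hxS, hxK⟩
  exact stmt_1_general (isCompact_box d) (vtx_subset_box d) (vtx_nonempty d) hf_below
    hg_cont.lowerSemicontinuousOn hg_zero hg_pos hloc
end
end

section
/- Let N be a positive integer, z, v ∈ ℝ^N, z̄ = (1/N)·Σⱼ zⱼ and v̄ = (1/N)·Σⱼ vⱼ. For T > 0 define F_T(z) = -Σⱼ softmax(v/T)ⱼ · log(softmax(z/T)ⱼ), whose partial derivative with respect to z_k is (1/T)·(softmax(z/T)_k - softmax(v/T)_k). Then for every index k, the limit as T → ∞ of T²·(1/T)·( softmax(z/T)_k - softmax(v/T)_k ) equals ( (z_k - z̄) - (v_k - v̄) )/N. -/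
open Filter

noncomputable section

/-!
Softening at temperature `T` evaluates softmax at `T⁻¹ • w`, a point tending to `0`. Hence
`T * (softmax (T⁻¹ • z) k - softmax (T⁻¹ • v) k)` is a difference quotient at the origin and tends
to the derivative there in the direction `z - v`. Since softmax is uniform at the origin, this
derivative is centring followed by division by the number of classes.
-/

section DifferenceQuotient

variable {E F : Type*} [NormedAddCommGroup E] [NormedSpace ℝ E]
  [NormedAddCommGroup F] [NormedSpace ℝ F]

lemma tendsto_smul_sub_of_hasFDerivAt {f : E → F} {f' : E →L[ℝ] F} {x : E}
    (hf : HasFDerivAt f f' x) (v w : E) :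
    Tendsto (fun c : ℝ => c • (f (x + c⁻¹ • v) - f (x + c⁻¹ • w))) atTop
      (nhds (f' (v - w))) := by
  simpa only [← smul_sub, sub_sub_sub_cancel_right, ← map_sub]
    using (hf.lim_real v).sub (hf.lim_real w)

end DifferenceQuotient

section Softmax

variable {ι : Type*} [Fintype ι]

/-- The softmax map, sending logits `w` indexed by a finite type to a probability vector. Softening
at temperature `T` is expressed by rescaling the logits: `softmax (T⁻¹ • w)`. -/
def softmax (w : ι → ℝ) (k : ι) : ℝ :=
  Real.exp (w k) / ∑ l, Real.exp (w l)

lemma softmax_zero (k : ι) : softmax 0 k = (Fintype.card ι : ℝ)⁻¹ := by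
  simp [softmax]

lemma softmax_inv_smul (T : ℝ) (w : ι → ℝ) (k : ι) :
    softmax (T⁻¹ • w) k = Real.exp (w k / T) / ∑ l, Real.exp (w l / T) := by
  simp only [softmax, Pi.smul_apply, smul_eq_mul, div_eq_inv_mul]

/-- The derivative of the `k`-th softmax coordinate at `x`: the logit direction `w` is centred at
its mean under `softmax x`, and the result is weighted by `softmax x k`. -/
def softmaxFDeriv (x : ι → ℝ) (k : ι) : (ι → ℝ) →L[ℝ] ℝ :=
  softmax x k • (.proj k - ∑ l, softmax x l • .proj l)

lemma softmaxFDeriv_apply (x w : ι → ℝ) (k : ι) :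
    softmaxFDeriv x k w = softmax x k * (w k - ∑ l, softmax x l * w l) := by
  simp [softmaxFDeriv]

lemma softmaxFDeriv_zero_apply (w : ι → ℝ) (k : ι) :
    softmaxFDeriv 0 k w = (w k - (∑ l, w l) / Fintype.card ι) / Fintype.card ι := by
  simp only [softmaxFDeriv_apply, softmax_zero, ← Finset.mul_sum, div_eq_inv_mul]

lemma hasFDerivAt_softmax (x : ι → ℝ) (k : ι) :
    HasFDerivAt (softmax · k) (softmaxFDeriv x k) x := by
  have hexp (l : ι) : HasFDerivAt (fun w : ι → ℝ => Real.exp (w l))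
      (Real.exp (x l) • ContinuousLinearMap.proj l) x :=
    (hasFDerivAt_apply l x).exp
  have hsum : HasFDerivAt (fun w : ι → ℝ => ∑ l, Real.exp (w l))
      (∑ l, Real.exp (x l) • ContinuousLinearMap.proj l) x :=
    .fun_sum fun l _ => hexp l
  have hpos : 0 < ∑ l, Real.exp (x l) :=
    Finset.sum_pos (fun l _ => Real.exp_pos _) ⟨k, Finset.mem_univ k⟩
  have hinv := (hasDerivAt_inv hpos.ne').comp_hasFDerivAt x hsum
  refine ((hexp k).mul hinv).congr_fderiv (ContinuousLinearMap.ext fun w => ?_)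
  simp only [softmaxFDeriv_apply, softmax, div_mul_eq_mul_div, ← Finset.sum_div,
    add_apply, smul_apply, sum_apply, ContinuousLinearMap.proj_apply, smul_eq_mul,
    Function.comp_apply]
  field_simp
  ring

theorem stmt_13_general (z v : ι → ℝ) (k : ι) :
    Tendsto
      (fun T : ℝ => T ^ 2 * ((1 / T) * (softmax (T⁻¹ • z) k - softmax (T⁻¹ • v) k)))
      atTop
      (nhds (((z k - (∑ j, z j) / Fintype.card ι) - (v k - (∑ j, v j) / Fintype.card ι)) /
        Fintype.card ι)) := by
  have hlim := tendsto_smul_sub_of_hasFDerivAt (hasFDerivAt_softmax 0 k) z v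
  rw [map_sub, softmaxFDeriv_zero_apply, softmaxFDeriv_zero_apply, ← sub_div] at hlim
  refine hlim.congr fun T => ?_
  have hT : T ^ 2 * (1 / T) = T := by
    field_simp
  rw [← mul_assoc, hT, zero_add, zero_add, smul_eq_mul]

end Softmax

/-- The gradients of the knowledge-distillation cross-entropy scale as `1/T²`: as `T → ∞`,
`T²·(1/T)·(softmax(z/T)_k - softmax(v/T)_k) → ((z_k - z̄) - (v_k - v̄))/N`, where
`softmax(w/T)_k = exp(w_k/T)/Σₗ exp(wₗ/T)` and `z̄`, `v̄` are the means of the logits. -/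
theorem stmt_13 (N : ℕ) (hN : 0 < N) (z v : Fin N → ℝ) (k : Fin N) :
    Tendsto
      (fun T : ℝ =>
        T ^ 2 * ((1 / T) *
          (Real.exp (z k / T) / (∑ l, Real.exp (z l / T)) -
            Real.exp (v k / T) / (∑ l, Real.exp (v l / T)))))
      atTop
      (nhds (((z k - (∑ j, z j) / N) - (v k - (∑ j, v j) / N)) / N)) := by
  simpa only [softmax_inv_smul, Fintype.card_fin] using stmt_13_general z v k
end
end
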